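/- For every tree T of order n ≥ 3, vcfc(T) ≤ log_{3/2} n, i.e., vcfc(T) ≤ (log n)/(log(3/2)). -/

import Mathlib

open SimpleGraph

/-- A vertex coloring with `k` colors makes `G` conflict-free vertex-connected if any two
distinct vertices are joined by a path on which some color is used on exactly one vertex. -/
def IsVCFCColoring {V : Type*} (G : SimpleGraph V) (k : ℕ) (c : V → Fin k) : Prop :=
  ∀ u v : V, u ≠ v → ∃ p : G.Walk u v, p.IsPath ∧
    ∃ i : Fin k, (p.support.filter (fun x => c x = i)).length = 1

/-- The conflict-free vertex-connection number: the least number of colors in a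
conflict-free vertex-connected coloring. -/
noncomputable def vcfc {V : Type*} (G : SimpleGraph V) : ℕ :=
  sInf {k | ∃ c : V → Fin k, IsVCFCColoring G k c}

/-!
Removing a centroid from a tree on fewer than `2 ^ (k + 1)` vertices leaves components on fewer than
`2 ^ k` vertices each. Color them recursively with the same `k` colors and give the centroid a color
of its own: every walk then carries a color used on only one of its vertices, since it either passes
through the centroid or stays inside one component. Hence `⌊log₂ n⌋ + 1` colors suffice for a tree,
and for a connected graph through a spanning tree; this is at most `log_{3/2} n` once `n ≥ 3`.
-/

section

variable {V α β : Type*} {G : SimpleGraph V}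

/-- Centered colorings, as in the theory of tree-depth: every connected subgraph has a vertex whose
color does not reappear in it. They make every path conflict-free, but unlike conflict-freeness they
can be built by recursion. Connected subgraphs are encoded by walks, whose supports are exactly the
finite connected vertex sets. -/
def IsCenteredColoring (G : SimpleGraph V) (c : V → α) : Prop :=
  ∀ ⦃u v : V⦄ (p : G.Walk u v), ∃ x ∈ p.support, ∀ y ∈ p.support, c y = c x → y = x

namespace IsCenteredColoring

variable {c : V → α}

lemma exists_mem_support_of_induce {s : Set V}
    (h : IsCenteredColoring (G.induce s) (fun v => c v)) {u v : V} (p : G.Walk u v)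
    (hp : ∀ w ∈ p.support, w ∈ s) :
    ∃ x ∈ p.support, ∀ y ∈ p.support, c y = c x → y = x := by
  obtain ⟨x, hx, hunique⟩ := h (p.induce s hp)
  simp only [Walk.support_induce, List.mem_attachWith] at hx hunique
  exact ⟨x, hx, fun y hy hyx => congrArg Subtype.val (hunique ⟨y, hp y hy⟩ hy hyx)⟩

lemma of_induce_compl_singleton {x : V} (hx : ∀ v, v ≠ x → c v ≠ c x)
    (h : IsCenteredColoring (G.induce {x}ᶜ) (fun v => c v)) : IsCenteredColoring G c := by
  intro u v p
  by_cases hxp : x ∈ p.support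
  · exact ⟨x, hxp, fun y _ => not_imp_not.1 (hx y)⟩
  · exact h.exists_mem_support_of_induce p fun w hw hwx => hxp (hwx ▸ hw)

lemma of_connectedComponent
    (h : ∀ C : G.ConnectedComponent, IsCenteredColoring C.toSimpleGraph (fun v => c v)) :
    IsCenteredColoring G c := by
  classical
  intro u v p
  exact (h (G.connectedComponentMk u)).exists_mem_support_of_induce p fun w hw =>
    ConnectedComponent.sound (p.takeUntil w hw).reachable.symm

lemma comp_injective {f : α → β} (hf : f.Injective) (h : IsCenteredColoring G c) :
    IsCenteredColoring G (f ∘ c) := fun _ _ p =>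
  let ⟨x, hx, hunique⟩ := h p
  ⟨x, hx, fun y hy hyx => hunique y hy (hf hyx)⟩

lemma isVCFCColoring {k : ℕ} {c : V → Fin k} (h : IsCenteredColoring G c) (hG : G.Connected) :
    IsVCFCColoring G k c := by
  classical
  intro u v _
  obtain ⟨p, hp⟩ := (hG u v).exists_isPath
  obtain ⟨x, hx, hunique⟩ := h p
  have hfilter : p.support.filter (fun y => c y = c x) = p.support.filter (fun y => y = x) :=
    List.filter_congr fun y hy => decide_eq_decide.2 ⟨hunique y hy, congrArg c⟩
  refine ⟨p, hp, c x, ?_⟩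
  rw [hfilter, List.filter_eq, List.length_replicate, List.count_eq_one_of_mem hp.support_nodup hx]

end IsCenteredColoring

lemma exists_isCenteredColoring_of_connectedComponent
    (h : ∀ C : G.ConnectedComponent, ∃ c : C → α, IsCenteredColoring C.toSimpleGraph c) :
    ∃ c : V → α, IsCenteredColoring G c := by
  choose c hc using h
  refine ⟨fun v => c (G.connectedComponentMk v) ⟨v, rfl⟩, .of_connectedComponent fun C => ?_⟩
  have hrestrict : (fun v : C => c (G.connectedComponentMk v) ⟨v, rfl⟩) = c C := by
    funext ⟨v, hv⟩
    obtain rfl : G.connectedComponentMk v = C := hv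
    rfl
  exact hrestrict ▸ hc C

lemma exists_isCenteredColoring_option_of_induce_compl_singleton {x : V}
    (h : ∃ c : ({x}ᶜ : Set V) → α, IsCenteredColoring (G.induce {x}ᶜ) c) :
    ∃ c : V → Option α, IsCenteredColoring G c := by
  classical
  obtain ⟨c, hc⟩ := h
  let c' : V → Option α := fun v => if hv : v = x then none else some (c ⟨v, hv⟩)
  have hc' : (fun v : ({x}ᶜ : Set V) => c' v) = some ∘ c := funext fun v => dif_neg v.2
  refine ⟨c', .of_induce_compl_singleton (x := x) (fun v hv => by simp [c', hv]) ?_⟩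
  exact hc' ▸ hc.comp_injective (Option.some_injective α)

lemma dist_eq_length_of_isPath (hG : G.IsAcyclic) {u v : V} {p : G.Walk u v} (hp : p.IsPath) :
    G.dist u v = p.length := by
  obtain ⟨q, hq, hlength⟩ := p.reachable.exists_path_of_dist
  obtain rfl : p = q := congrArg Subtype.val ((hG.subsingleton_path u v).elim ⟨p, hp⟩ ⟨q, hq⟩)
  exact hlength.symm

lemma dist_eq_dist_add_one_of_reachable_induce_compl_singleton (hG : G.IsAcyclic) {x : V}
    {y v : ({x}ᶜ : Set V)} (hxy : G.Adj x y) (h : (G.induce {x}ᶜ).Reachable y v) :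
    G.dist x v = G.dist y v + 1 := by
  obtain ⟨p, hp⟩ := h.exists_isPath
  let f : G.induce {x}ᶜ →g G := (Embedding.induce {x}ᶜ).toHom
  have hq : (p.map f).IsPath := hp.map Subtype.val_injective
  have hx : x ∉ (p.map f).support := by
    rw [Walk.support_map, List.mem_map]
    rintro ⟨w, -, hw⟩
    exact w.2 hw
  calc G.dist x v = (p.map f).length + 1 := dist_eq_length_of_isPath hG (hq.cons (h := hxy) hx)
    _ = G.dist y v + 1 := congrArg (· + 1) (dist_eq_length_of_isPath hG hq).symm

/-- `x` is a centroid of `G`: no component of `G - x` contains more than half of the vertices. This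
halving is what bounds the depth of the recursion. The cardinalities are natural numbers, so the
notion is meaningful for finite `V` only. -/
def IsCentroid (G : SimpleGraph V) (x : V) : Prop :=
  ∀ C : (G.induce {x}ᶜ).ConnectedComponent, 2 * C.supp.ncard ≤ Nat.card V

-- If `y` is the neighbor of `x` in `C`, moving from `x` to `y` shortens the distances to `C` by one
-- and lengthens each other distance by at most one, so minimality at `x` bounds the size of `C`.
lemma isCentroid_of_forall_sum_dist_le [Fintype V] (hG : G.IsTree) {x : V}
    (hx : ∀ y, ∑ v, G.dist x v ≤ ∑ v, G.dist y v) : IsCentroid G x := by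
  classical
  intro C
  obtain ⟨⟨y, z⟩, ⟨hy, hyC⟩, hz, hyz⟩ := ComponentCompl.exists_adj_boundary_pair
    hG.connected.preconnected (Set.singleton_nonempty x) C
  have hxy : G.Adj x y := (Set.mem_singleton_iff.1 hz ▸ hyz).symm
  let s : Finset V := (Subtype.val '' C.supp).toFinset
  have hs : s.card = C.supp.ncard := by
    rw [← Set.ncard_eq_toFinset_card', Set.ncard_image_of_injective _ Subtype.val_injective]
  have hnear : ∀ v ∈ s, G.dist y v + 1 = G.dist x v := by
    intro v hv
    obtain ⟨w, hw, rfl⟩ := Set.mem_toFinset.1 hv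
    exact (dist_eq_dist_add_one_of_reachable_induce_compl_singleton hG.isAcyclic hxy
      (ConnectedComponent.exact (hyC.trans hw.symm))).symm
  have hfar : ∀ v, G.dist y v ≤ G.dist x v + 1 := fun v => by
    have := hG.connected.dist_triangle (u := y) (v := x) (w := v)
    rw [dist_eq_one_iff_adj.2 hxy.symm] at this
    omega
  have hsum_near : ∑ v ∈ s, G.dist y v + s.card = ∑ v ∈ s, G.dist x v := by
    rw [← Finset.sum_congr rfl hnear, Finset.sum_add_distrib, Finset.card_eq_sum_ones]
  have hsum_far : ∑ v ∈ sᶜ, G.dist y v ≤ ∑ v ∈ sᶜ, G.dist x v + sᶜ.card := by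
    simpa [Finset.sum_add_distrib] using Finset.sum_le_sum fun v (_ : v ∈ sᶜ) => hfar v
  have hmedian : ∑ v ∈ s, G.dist x v + ∑ v ∈ sᶜ, G.dist x v ≤
      ∑ v ∈ s, G.dist y v + ∑ v ∈ sᶜ, G.dist y v := by
    simpa only [Finset.sum_add_sum_compl] using hx y
  have hcard : s.card + sᶜ.card = Nat.card V :=
    s.card_add_card_compl.trans Nat.card_eq_fintype_card.symm
  omega

lemma exists_isCentroid [Finite V] (hG : G.IsTree) : ∃ x, IsCentroid G x := by
  have := Fintype.ofFinite V
  have := hG.connected.nonempty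
  obtain ⟨x, hx⟩ := Finite.exists_min fun x => ∑ v, G.dist x v
  exact ⟨x, isCentroid_of_forall_sum_dist_le hG hx⟩

lemma exists_isCenteredColoring_of_card_lt_two_pow [Finite V] (hG : G.IsTree) {k : ℕ}
    (hk : Nat.card V < 2 ^ k) : ∃ c : V → Fin k, IsCenteredColoring G c := by
  induction k generalizing V with
  | zero =>
    have := hG.connected.nonempty
    exact absurd hk (by simp [Nat.card_pos.ne'])
  | succ k ih =>
    obtain ⟨x, hx⟩ := exists_isCentroid hG
    have hsmall (C : (G.induce {x}ᶜ).ConnectedComponent) : C.supp.ncard < 2 ^ k := by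
      have := hx C
      rw [pow_succ] at hk
      omega
    obtain ⟨c, hc⟩ := exists_isCenteredColoring_option_of_induce_compl_singleton <|
      exists_isCenteredColoring_of_connectedComponent fun C =>
        ih ((hG.isAcyclic.induce {x}ᶜ).isTree_connectedComponent C)
          ((Nat.card_coe_set_eq C.supp).trans_lt (hsmall C))
    exact ⟨_, hc.comp_injective (finSuccEquiv k).symm.injective⟩

lemma IsVCFCColoring.mono {H : SimpleGraph V} (hGH : G ≤ H) {k : ℕ} {c : V → Fin k}
    (h : IsVCFCColoring G k c) : IsVCFCColoring H k c := by
  intro u v huv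
  obtain ⟨p, hp, i, hi⟩ := h u v huv
  exact ⟨p.mapLe hGH, hp.mapLe hGH, i, by rwa [Walk.support_mapLe_eq_support]⟩

theorem vcfc_le_log_two_add_one [Finite V] (hG : G.Connected) :
    vcfc G ≤ Nat.log 2 (Nat.card V) + 1 := by
  obtain ⟨T, hTG, hT⟩ := hG.exists_isTree_le
  obtain ⟨c, hc⟩ := exists_isCenteredColoring_of_card_lt_two_pow hT
    (Nat.lt_pow_succ_log_self one_lt_two (Nat.card V))
  exact Nat.sInf_le ⟨c, (hc.isVCFCColoring hT.connected).mono hTG⟩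

lemma three_halves_pow_succ_le_two_pow {m : ℕ} (hm : 2 ≤ m) : (3 / 2 : ℝ) ^ (m + 1) ≤ 2 ^ m := by
  induction m, hm using Nat.le_induction with
  | base => norm_num
  | succ m _ ih =>
    calc (3 / 2 : ℝ) ^ (m + 1 + 1) = (3 / 2) ^ (m + 1) * (3 / 2) := pow_succ _ _
      _ ≤ 2 ^ m * 2 := by gcongr; norm_num
      _ = 2 ^ (m + 1) := (pow_succ _ _).symm

lemma three_halves_pow_log_two_add_one_le {n : ℕ} (hn : 3 ≤ n) :
    (3 / 2 : ℝ) ^ (Nat.log 2 n + 1) ≤ n := by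
  obtain rfl | hn4 : n = 3 ∨ 4 ≤ n := by omega
  · have hlog : Nat.log 2 3 = 1 := by norm_num
    norm_num [hlog]
  · calc (3 / 2 : ℝ) ^ (Nat.log 2 n + 1) ≤ 2 ^ Nat.log 2 n :=
        three_halves_pow_succ_le_two_pow (Nat.le_log_of_pow_le one_lt_two hn4)
      _ ≤ n := mod_cast Nat.pow_log_le_self 2 (by omega)

theorem vcfc_tree_le_log_general [Finite V] (hG : G.Connected) (h3 : 3 ≤ Nat.card V) :
    (vcfc G : ℝ) ≤ Real.log (Nat.card V) / Real.log (3 / 2) := by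
  rw [le_div_iff₀ (Real.log_pos (by norm_num))]
  calc (vcfc G : ℝ) * Real.log (3 / 2)
      ≤ (Nat.log 2 (Nat.card V) + 1 : ℕ) * Real.log (3 / 2) := by
        gcongr
        exact vcfc_le_log_two_add_one hG
    _ = Real.log ((3 / 2) ^ (Nat.log 2 (Nat.card V) + 1)) := (Real.log_pow _ _).symm
    _ ≤ Real.log (Nat.card V) :=
        Real.log_le_log (by positivity) (three_halves_pow_log_two_add_one_le h3)

end

/-- For every tree `T` of order `n ≥ 3`, `vcfc(T) ≤ log n / log (3/2)`. -/
theorem vcfc_tree_le_log {V : Type*} [Fintype V] (T : SimpleGraph V) (hT : T.IsTree)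
    (n : ℕ) (hn : Fintype.card V = n) (h3 : 3 ≤ n) :
    (vcfc T : ℝ) ≤ Real.log n / Real.log (3 / 2) :=
  have hcard : Nat.card V = n := Nat.card_eq_fintype_card.trans hn
  hcard ▸ vcfc_tree_le_log_general hT.connected (hcard ▸ h3)
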